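/- (Shirshov's theorem analogue) Every Tortkara algebra over a field of characteristic 0 generated by two elements is special, i.e., isomorphic to a subalgebra of A^(−) for some Zinbiel algebra A. -/

import Mathlib

/-- A bundled Zinbiel algebra over `K`: a nonunital nonassociative `K`-algebra whose
product satisfies the Zinbiel identity `a∘(b∘c) = (a∘b + b∘a)∘c`. -/
structure ZinbielAlgebra (K : Type) [Field K] : Type 1 where
  carrier : Type
  [ring : NonUnitalNonAssocRing carrier]
  [mod : Module K carrier]
  [smulComm : SMulCommClass K carrier carrier]
  [tower : IsScalarTower K carrier carrier]
  zinbiel : ∀ a b c : carrier, a * (b * c) = (a * b + b * a) * c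

attribute [instance] ZinbielAlgebra.ring ZinbielAlgebra.mod
  ZinbielAlgebra.smulComm ZinbielAlgebra.tower

/-- A bundled Tortkara algebra over `K`: an anticommutative nonunital nonassociative
`K`-algebra satisfying `(ab)(cb) = J(a,b,c)b`, where `J(a,b,c) = (ab)c+(bc)a+(ca)b`. -/
structure TortkaraAlgebra (K : Type) [Field K] : Type 1 where
  carrier : Type
  [ring : NonUnitalNonAssocRing carrier]
  [mod : Module K carrier]
  [smulComm : SMulCommClass K carrier carrier]
  [tower : IsScalarTower K carrier carrier]
  anticomm : ∀ a b : carrier, a * b = -(b * a)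
  tortkara : ∀ a b c : carrier,
    (a * b) * (c * b) = ((a * b) * c + (b * c) * a + (c * a) * b) * b

attribute [instance] TortkaraAlgebra.ring TortkaraAlgebra.mod
  TortkaraAlgebra.smulComm TortkaraAlgebra.tower


set_option linter.unusedSectionVars false

namespace TK

/-- Shuffle algebra of formal noncommutative series in two letters (words are read reversed). -/
def Sh (K : Type) : Type := List Bool → K

section shuffle
variable {K : Type} [Field K]

instance : AddCommGroup (Sh K) := inferInstanceAs (AddCommGroup (List Bool → K))
instance : Module K (Sh K) := inferInstanceAs (Module K (List Bool → K))

theorem Sh.ext' {f g : Sh K} (h : ∀ w, f w = g w) : f = g := funext h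
theorem Sh.add_app (f g : Sh K) (w : List Bool) : (f + g) w = f w + g w := rfl
theorem Sh.neg_app (f : Sh K) (w : List Bool) : (-f) w = -(f w) := rfl
theorem Sh.sub_app (f g : Sh K) (w : List Bool) : (f - g) w = f w - g w := rfl
theorem Sh.zero_app (w : List Bool) : (0 : Sh K) w = 0 := rfl
theorem Sh.smul_app (k : K) (f : Sh K) (w : List Bool) : (k • f) w = k * f w := rfl

/-- removal of the last letter -/
def dd (x : Bool) (f : Sh K) : Sh K := fun w => f (x :: w)

theorem dd_add (x : Bool) (f g : Sh K) : dd x (f + g) = dd x f + dd x g := rfl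
theorem dd_neg (x : Bool) (f : Sh K) : dd x (-f) = -dd x f := rfl
theorem dd_sub (x : Bool) (f g : Sh K) : dd x (f - g) = dd x f - dd x g := rfl
theorem dd_zero (x : Bool) : dd x (0 : Sh K) = 0 := rfl
theorem dd_smul (x : Bool) (k : K) (f : Sh K) : dd x (k • f) = k • dd x f := rfl

def shm : List Bool → Sh K → Sh K → K
  | [], f, g => f [] * g []
  | x :: w, f, g => shm w (dd x f) g + shm w f (dd x g)

theorem shm_add (w : List Bool) : ∀ f g h : Sh K, shm w f (g + h) = shm w f g + shm w f h := by
  induction w with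
  | nil => intro f g h; simp [shm, Sh.add_app, mul_add]
  | cons x w ih => intro f g h; simp only [shm, dd_add, ih]; abel

theorem shm_smul (w : List Bool) : ∀ (k : K) (f g : Sh K), shm w f (k • g) = k * shm w f g := by
  induction w with
  | nil => intro k f g; simp only [shm, Sh.smul_app]; ring
  | cons x w ih => intro k f g; simp only [shm, dd_smul, ih]; ring

theorem shm_comm (w : List Bool) : ∀ f g : Sh K, shm w f g = shm w g f := by
  induction w with
  | nil => intro f g; simp only [shm]; ring
  | cons x w ih => intro f g; simp only [shm]; rw [ih (dd x f), ih f, add_comm]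

instance : Mul (Sh K) := ⟨fun f g w => shm w f g⟩
instance : One (Sh K) := ⟨fun w => match w with | [] => 1 | _ :: _ => 0⟩

theorem mul_app (f g : Sh K) (w : List Bool) : (f * g) w = shm w f g := rfl
theorem mul_nil (f g : Sh K) : (f * g) [] = f [] * g [] := rfl
theorem one_nil : (1 : Sh K) [] = 1 := rfl
theorem one_cons (x : Bool) (w : List Bool) : (1 : Sh K) (x :: w) = 0 := rfl
theorem dd_one (x : Bool) : dd x (1 : Sh K) = 0 := rfl
theorem dd_mul (x : Bool) (f g : Sh K) : dd x (f * g) = dd x f * g + f * dd x g := rfl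

theorem sh_comm (f g : Sh K) : f * g = g * f := Sh.ext' fun w => shm_comm w f g
theorem sh_mul_add (f g h : Sh K) : f * (g + h) = f * g + f * h := Sh.ext' fun w => shm_add w f g h
theorem sh_add_mul (f g h : Sh K) : (f + g) * h = f * h + g * h := by
  rw [sh_comm, sh_mul_add, sh_comm h, sh_comm h]
theorem sh_mul_smul (k : K) (f g : Sh K) : f * (k • g) = k • (f * g) :=
  Sh.ext' fun w => shm_smul w k f g

theorem sh_assoc_app (w : List Bool) : ∀ f g h : Sh K, (f * g * h) w = (f * (g * h)) w := by
  induction w with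
  | nil => intro f g h; simp only [mul_nil]; ring
  | cons x w ih =>
    intro f g h
    change dd x (f * g * h) w = dd x (f * (g * h)) w
    simp only [dd_mul, sh_add_mul, sh_mul_add, Sh.add_app, ih]; ring

theorem sh_one_app (w : List Bool) : ∀ f : Sh K, (1 * f) w = f w := by
  induction w with
  | nil => intro f; simp only [mul_nil, one_nil, one_mul]
  | cons x w ih =>
    intro f
    change dd x (1 * f) w = dd x f w
    have h0 : ∀ g : Sh K, (0 : Sh K) * g = 0 := fun g => by
      have := sh_add_mul 0 0 g
      simpa using this
    simp only [dd_mul, dd_one, Sh.add_app, ih, h0, Sh.zero_app, zero_add]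

instance : CommRing (Sh K) :=
  { (inferInstance : AddCommGroup (Sh K)) with
    mul := (· * ·)
    one := 1
    mul_comm := sh_comm
    mul_assoc := fun f g h => Sh.ext' fun w => sh_assoc_app w f g h
    one_mul := fun f => Sh.ext' fun w => sh_one_app w f
    mul_one := fun f => by rw [sh_comm]; exact Sh.ext' fun w => sh_one_app w f
    left_distrib := sh_mul_add
    right_distrib := sh_add_mul
    zero_mul := fun g => by simpa using sh_add_mul 0 0 g
    mul_zero := fun g => by simpa using sh_mul_add g 0 0 }

theorem sh_smul_mul (k : K) (f g : Sh K) : (k • f) * g = k • (f * g) := by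
  rw [mul_comm, sh_mul_smul, mul_comm]

theorem Sh.ext_dd {f g : Sh K} (h0 : f [] = g []) (ha : dd false f = dd false g)
    (hb : dd true f = dd true g) : f = g := by
  apply Sh.ext'
  intro w
  match w with
  | [] => exact h0
  | false :: w => exact congrFun ha w
  | true :: w => exact congrFun hb w

/-- appending a letter -/
def ii (x : Bool) (f : Sh K) : Sh K := fun w =>
  match w with
  | [] => 0
  | y :: w => if y = x then f w else 0

theorem ii_nil (x : Bool) (f : Sh K) : ii x f [] = 0 := rfl
theorem dd_ii_self (x : Bool) (f : Sh K) : dd x (ii x f) = f := by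
  apply Sh.ext'; intro w; simp [dd, ii]
theorem dd_ii_ft (f : Sh K) : dd false (ii true f) = 0 := by
  apply Sh.ext'; intro w; simp [dd, ii, Sh.zero_app]
theorem dd_ii_tf (f : Sh K) : dd true (ii false f) = 0 := by
  apply Sh.ext'; intro w; simp [dd, ii, Sh.zero_app]
theorem ii_add (x : Bool) (f g : Sh K) : ii x (f + g) = ii x f + ii x g := by
  apply Sh.ext'; intro w
  cases w with
  | nil => simp [ii, Sh.add_app]
  | cons y w => by_cases h : y = x <;> simp [ii, Sh.add_app, h]
theorem ii_smul (x : Bool) (k : K) (f : Sh K) : ii x (k • f) = k • ii x f := by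
  apply Sh.ext'; intro w
  cases w with
  | nil => simp [ii, Sh.smul_app]
  | cons y w => by_cases h : y = x <;> simp [ii, Sh.smul_app, h]
theorem ii_zero (x : Bool) : ii x (0 : Sh K) = 0 := by
  apply Sh.ext'; intro w
  cases w with
  | nil => rfl
  | cons y w => by_cases h : y = x <;> simp [ii, Sh.zero_app, h]

/-- the letters -/
def la : Sh K := ii false 1
def lb : Sh K := ii true 1
theorem la_nil : (la : Sh K) [] = 0 := rfl
theorem lb_nil : (lb : Sh K) [] = 0 := rfl
theorem dda_la : dd false (la : Sh K) = 1 := dd_ii_self _ _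
theorem ddb_la : dd true (la : Sh K) = 0 := dd_ii_tf _
theorem dda_lb : dd false (lb : Sh K) = 0 := dd_ii_ft _
theorem ddb_lb : dd true (lb : Sh K) = 1 := dd_ii_self _ _

def DD (f : Sh K) : Sh K := la * dd false f + lb * dd true f

def MM : ℕ → Sh K → Prop
  | 0, _ => True
  | n + 1, x => ∃ f g, MM n f ∧ MM n g ∧ x = la * f + lb * g

theorem MM_smul (k : K) : ∀ (n : ℕ) (x : Sh K), MM n x → MM n (k • x)
  | 0, _, _ => trivial
  | n + 1, _, ⟨f, g, hf, hg, e⟩ =>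
    ⟨k • f, k • g, MM_smul k n f hf, MM_smul k n g hg, by
      rw [e, sh_mul_smul, sh_mul_smul, smul_add]⟩

theorem MM_step : ∀ (n : ℕ) (x : Sh K), MM n x → MM (n + 1) (DD x - (n : K) • x)
  | 0, x, _ => ⟨dd false x, dd true x, trivial, trivial, by simp [DD]⟩
  | n + 1, _, ⟨f, g, hf, hg, e⟩ =>
    ⟨_, _, MM_step n f hf, MM_step n g hg, by
      subst e
      simp only [DD, dd_add, dd_mul, dda_la, ddb_la, dda_lb, ddb_lb, mul_sub, sh_mul_smul,
        Nat.cast_add, Nat.cast_one, add_smul, one_smul, smul_add]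
      ring⟩

theorem vanish_letter (l : Sh K) (h0 : l [] = 0) (h1 : ∀ x, dd x l = 0 ∨ dd x l = 1)
    (w : List Bool) : ∀ (n : ℕ) (f : Sh K), (∀ v, v.length < n → f v = 0) → w.length < n + 1 →
      (l * f) w = 0 := by
  induction w with
  | nil => intro n f _ _; rw [mul_nil, h0, zero_mul]
  | cons x w ih =>
    intro n f hf hw
    change dd x (l * f) w = 0
    rw [dd_mul, Sh.add_app]
    have hw' : w.length < n := by simpa using hw
    have e1 : (dd x l * f) w = 0 := by
      rcases h1 x with h | h <;> rw [h]
      · rw [zero_mul]; rfl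
      · rw [one_mul]; exact hf w hw'
    rw [e1, zero_add]
    obtain ⟨m, rfl⟩ : ∃ m, n = m + 1 := ⟨n - 1, by omega⟩
    exact ih m _ (fun v hv => hf (x :: v) (by simpa using hv)) hw'

theorem MM_vanish : ∀ (n : ℕ) (x : Sh K), MM n x → ∀ w, w.length < n → x w = 0
  | 0, _, _, w, hw => absurd hw (by omega)
  | n + 1, _, ⟨f, g, hf, hg, e⟩, w, hw => by
    subst e
    rw [Sh.add_app, vanish_letter la la_nil _ w n f (MM_vanish n f hf) hw,
      vanish_letter lb lb_nil _ w n g (MM_vanish n g hg) hw, add_zero]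
    · intro x; cases x
      · exact Or.inl dda_lb
      · exact Or.inr ddb_lb
    · intro x; cases x
      · exact Or.inr dda_la
      · exact Or.inl ddb_la

theorem eig_zero (n0 : ℕ) (μ : K) (h : Sh K) (hM : MM n0 h) (hD : DD h = μ • h)
    (hμ : ∀ n : ℕ, n0 ≤ n → μ - n ≠ 0) : h = 0 := by
  have key : ∀ j, MM (n0 + j) h := by
    intro j
    induction j with
    | zero => exact hM
    | succ j ih =>
      have := MM_smul (μ - (n0 + j : ℕ))⁻¹ _ _ (MM_step _ _ ih)
      rw [hD, ← sub_smul, smul_smul, inv_mul_cancel₀ (hμ _ (by omega)), one_smul] at this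
      exact this
  apply Sh.ext'
  intro w
  exact MM_vanish _ _ (key (w.length + 1)) w (by omega)

/-- the skew element `w(ab - ba)` -/
def sk (w : Sh K) : Sh K := ii true (ii false w) - ii false (ii true w)

theorem sk_nil (w : Sh K) : sk w [] = 0 := by simp [sk, Sh.sub_app, ii_nil]
theorem dda_sk (w : Sh K) : dd false (sk w) = - ii true w := by
  simp [sk, dd_sub, dd_ii_self, dd_ii_ft]
theorem ddb_sk (w : Sh K) : dd true (sk w) = ii false w := by
  simp [sk, dd_sub, dd_ii_self, dd_ii_tf]
theorem sk_add (f g : Sh K) : sk (f + g) = sk f + sk g := by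
  simp only [sk, ii_add]; abel
theorem sk_smul (k : K) (f : Sh K) : sk (k • f) = k • sk f := by
  simp only [sk, ii_smul, smul_sub]
theorem sk_inj (w : Sh K) (h : sk w = 0) : w = 0 := by
  have h1 := ddb_sk w
  rw [h, dd_zero] at h1
  rw [← dd_ii_self false w, ← h1, dd_zero]

/-- P1 -/
theorem inj_step [CharZero K] (k : K) (f g : Sh K)
    (h : k • (1 : Sh K) + (ii false f + la * f) + (ii true g + lb * g) = 0) :
    k = 0 ∧ f = 0 ∧ g = 0 := by
  have hk : k = 0 := by
    have := congrFun h []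
    simpa [Sh.add_app, Sh.smul_app, ii_nil, mul_nil, la_nil, lb_nil, one_nil, Sh.zero_app] using this
  subst hk
  rw [zero_smul, zero_add] at h
  set q : Sh K := la * f + lb * g with hq
  have hq' : q = -(ii false f + ii true g) := by
    rw [hq]; linear_combination h
  have ha : dd false q = -f := by
    rw [hq', dd_neg, dd_add, dd_ii_self, dd_ii_ft, add_zero]
  have hb : dd true q = -g := by
    rw [hq', dd_neg, dd_add, dd_ii_self, dd_ii_tf, zero_add]
  have hD : DD q = (-1 : K) • q := by
    rw [DD, ha, hb, neg_one_smul]; rw [hq]; ring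
  have h0 : q = 0 := eig_zero 0 (-1) q trivial hD (fun n _ => by
    have : ((n : K) + 1) ≠ 0 := by exact_mod_cast Nat.succ_ne_zero n
    intro e; apply this; linear_combination -e)
  rw [h0, dd_zero] at ha hb
  exact ⟨rfl, neg_eq_zero.mp ha.symm, neg_eq_zero.mp hb.symm⟩

/-- P2 -/
theorem sk_not_decomp [CharZero K] (w X Y : Sh K) (h : sk w = la * X + lb * Y) : w = 0 := by
  set g : Sh K := sk w - DD (sk w) with hg
  have hDs : DD (sk w) = lb * ii false w - la * ii true w := by
    rw [DD, dda_sk, ddb_sk]; ring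
  have hM : MM 1 g := ⟨X - dd false (sk w), Y - dd true (sk w), trivial, trivial, by
    rw [hg, DD]; nth_rewrite 1 [h]; ring⟩
  have hDg : DD g = 0 := by
    rw [hg, hDs, DD]
    simp only [dd_sub, dd_mul, dda_la, ddb_la, dda_lb, ddb_lb, dda_sk, ddb_sk, dd_ii_self,
      dd_ii_ft, dd_ii_tf]
    ring
  have h0 : g = 0 := eig_zero 1 0 g hM (by rw [hDg, zero_smul]) (fun n hn => by
    rw [zero_sub, neg_ne_zero]; exact_mod_cast (by omega : n ≠ 0))
  have hs : sk w = lb * ii false w - la * ii true w := by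
    rw [← hDs]; exact sub_eq_zero.mp h0
  have e1 := congrArg (dd false) hs
  have e2 := congrArg (dd true) hs
  simp only [dd_sub, dd_mul, dda_la, ddb_la, dda_lb, ddb_lb, dda_sk, ddb_sk, dd_ii_self,
      dd_ii_ft, dd_ii_tf] at e1 e2
  have hbw : lb * w = 0 := by linear_combination -e1
  have haw : la * w = 0 := by linear_combination e2
  have e3 := congrArg (dd false) haw
  have e4 := congrArg (dd true) hbw
  simp only [dd_mul, dda_la, ddb_lb, dd_zero] at e3 e4
  refine eig_zero 0 (-2) w trivial ?_ (fun n _ => ?_)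
  · have : (-2 : K) • w = -w - w := by rw [neg_smul, two_smul]; abel
    rw [this, DD]; linear_combination e3 + e4
  · have : ((n : K) + 2) ≠ 0 := by exact_mod_cast (by omega : n + 2 ≠ 0)
    intro e; apply this; linear_combination -e

/-- half-shuffle -/
def hs (f g : Sh K) : Sh K := ii false (f * dd false g) + ii true (f * dd true g)

theorem hs_nil (f g : Sh K) : hs f g [] = 0 := by simp [hs, Sh.add_app, ii_nil]
theorem dda_hs (f g : Sh K) : dd false (hs f g) = f * dd false g := by
  simp [hs, dd_add, dd_ii_self, dd_ii_ft]
theorem ddb_hs (f g : Sh K) : dd true (hs f g) = f * dd true g := by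
  simp [hs, dd_add, dd_ii_self, dd_ii_tf]
theorem hs_add_hs (f g : Sh K) (hf : f [] = 0) : hs f g + hs g f = f * g := by
  apply Sh.ext_dd
  · simp [Sh.add_app, hs_nil, mul_nil, hf]
  · simp only [dd_add, dda_hs, dd_mul]; ring
  · simp only [dd_add, ddb_hs, dd_mul]; ring

theorem hs_zinbiel (f g h : Sh K) (hf : f [] = 0) :
    hs f (hs g h) = hs (hs f g + hs g f) h := by
  rw [hs_add_hs f g hf]
  apply Sh.ext_dd
  · simp only [hs_nil]
  · simp only [dda_hs]; ring
  · simp only [ddb_hs]; ring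

theorem br_sk_a (w : Sh K) : hs (sk w) la - hs la (sk w) = - sk (ii false w + la * w) := by
  apply Sh.ext_dd
  · simp [Sh.sub_app, Sh.neg_app, hs_nil, sk_nil]
  · simp only [dd_sub, dd_neg, dda_hs, dda_la, dda_sk]
    apply Sh.ext_dd
    · simp [Sh.sub_app, Sh.neg_app, mul_nil, sk_nil, la_nil, ii_nil]
    · simp only [dd_sub, dd_neg, dd_mul, dda_la, dda_sk, dd_ii_ft, dd_one]; ring
    · simp only [dd_sub, dd_neg, dd_mul, ddb_la, ddb_sk, dd_ii_self, dd_one]; ring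
  · simp only [dd_sub, dd_neg, ddb_hs, ddb_la, ddb_sk]
    apply Sh.ext_dd
    · simp [Sh.sub_app, Sh.neg_app, mul_nil, la_nil, ii_nil, Sh.zero_app]
    · simp only [dd_sub, dd_neg, dd_mul, dda_la, dd_ii_self, dd_zero]; ring
    · simp only [dd_sub, dd_neg, dd_mul, ddb_la, dd_ii_tf, dd_zero]; ring

theorem br_sk_b (w : Sh K) : hs (sk w) lb - hs lb (sk w) = - sk (ii true w + lb * w) := by
  apply Sh.ext_dd
  · simp [Sh.sub_app, Sh.neg_app, hs_nil, sk_nil]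
  · simp only [dd_sub, dd_neg, dda_hs, dda_lb, dda_sk]
    apply Sh.ext_dd
    · simp [Sh.sub_app, Sh.neg_app, mul_nil, lb_nil, ii_nil, Sh.zero_app]
    · simp only [dd_sub, dd_neg, dd_mul, dda_lb, dd_ii_ft, dd_zero]; ring
    · simp only [dd_sub, dd_neg, dd_mul, ddb_lb, dd_ii_self, dd_zero]; ring
  · simp only [dd_sub, dd_neg, ddb_hs, ddb_lb, ddb_sk]
    apply Sh.ext_dd
    · simp [Sh.sub_app, Sh.neg_app, mul_nil, sk_nil, lb_nil, ii_nil]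
    · simp only [dd_sub, dd_neg, dd_mul, dda_lb, dda_sk, dd_ii_self, dd_one]; ring
    · simp only [dd_sub, dd_neg, dd_mul, ddb_lb, ddb_sk, dd_ii_tf, dd_one]; ring

theorem br_ab : hs (la : Sh K) lb - hs lb la = sk 1 := by
  apply Sh.ext_dd
  · simp [Sh.sub_app, hs_nil, sk_nil]
  · simp only [dd_sub, dda_hs, dda_la, dda_lb, dda_sk]; rw [lb]; ring
  · simp only [dd_sub, ddb_hs, ddb_la, ddb_lb, ddb_sk]; rw [la]; ring

/-- series without constant term -/
def Zn (K : Type) [Field K] : Type := {f : Sh K // f [] = 0}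

def ZnS (K : Type) [Field K] : Submodule K (Sh K) where
  carrier := {f | f [] = 0}
  add_mem' := by intro f g hf hg; simp_all [Sh.add_app]
  zero_mem' := rfl
  smul_mem' := by intro k f hf; simp_all [Sh.smul_app]

instance : AddCommGroup (Zn K) := inferInstanceAs (AddCommGroup (ZnS K))
instance : Module K (Zn K) := inferInstanceAs (Module K (ZnS K))

instance : Mul (Zn K) := ⟨fun f g => ⟨hs f.1 g.1, hs_nil _ _⟩⟩

theorem Zn.mul_val (f g : Zn K) : (f * g).1 = hs f.1 g.1 := rfl
theorem Zn.add_val (f g : Zn K) : (f + g).1 = f.1 + g.1 := rfl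
theorem Zn.sub_val (f g : Zn K) : (f - g).1 = f.1 - g.1 := rfl
theorem Zn.neg_val (f : Zn K) : (-f).1 = -f.1 := rfl
theorem Zn.zero_val : (0 : Zn K).1 = 0 := rfl
theorem Zn.smul_val (k : K) (f : Zn K) : (k • f).1 = k • f.1 := rfl

theorem hs_add (f g h : Sh K) : hs f (g + h) = hs f g + hs f h := by
  simp only [hs, dd_add, mul_add, ii_add]; abel
theorem add_hs (f g h : Sh K) : hs (f + g) h = hs f h + hs g h := by
  simp only [hs, add_mul, ii_add]; abel
theorem hs_smul (k : K) (f g : Sh K) : hs f (k • g) = k • hs f g := by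
  simp only [hs, dd_smul, sh_mul_smul, ii_smul, smul_add]
theorem smul_hs (k : K) (f g : Sh K) : hs (k • f) g = k • hs f g := by
  simp only [hs, sh_smul_mul, ii_smul, smul_add]

instance : NonUnitalNonAssocRing (Zn K) :=
  { (inferInstance : AddCommGroup (Zn K)) with
    mul := (· * ·)
    left_distrib := fun f g h => Subtype.ext (hs_add _ _ _)
    right_distrib := fun f g h => Subtype.ext (add_hs _ _ _)
    zero_mul := fun g => Subtype.ext (by
      have := add_hs 0 0 g.1
      rw [add_zero] at this
      exact left_eq_add.mp this)
    mul_zero := fun g => Subtype.ext (by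
      have := hs_add g.1 0 0
      rw [add_zero] at this
      exact left_eq_add.mp this) }

instance : SMulCommClass K (Zn K) (Zn K) :=
  ⟨fun k f g => Subtype.ext (by
    simp only [smul_eq_mul, Zn.smul_val, Zn.mul_val, hs_smul])⟩
instance : IsScalarTower K (Zn K) (Zn K) :=
  ⟨fun k f g => Subtype.ext (by
    simp only [smul_eq_mul, Zn.smul_val, Zn.mul_val, smul_hs])⟩

theorem Zn.zinbiel (f g h : Zn K) : f * (g * h) = (f * g + g * f) * h :=
  Subtype.ext (hs_zinbiel _ _ _ f.2)

theorem Zn.sym_val (f g : Zn K) : (f * g + g * f).1 = f.1 * g.1 := hs_add_hs _ _ f.2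

def za : Zn K := ⟨la, la_nil⟩
def zb : Zn K := ⟨lb, lb_nil⟩
def zs (w : Sh K) : Zn K := ⟨sk w, sk_nil w⟩

end shuffle

section tort
variable {K : Type} [Field K] {L : Type} [AddCommGroup L] [Module K L]

/-- span of the right-normed words applied to `[a,b]` -/
inductive InM (br : L →ₗ[K] L →ₗ[K] L) (a b : L) : L → Prop
  | c : InM br a b (br a b)
  | zero : InM br a b 0
  | add {u v : L} : InM br a b u → InM br a b v → InM br a b (u + v)
  | smul (k : K) {u : L} : InM br a b u → InM br a b (k • u)
  | ra {u : L} : InM br a b u → InM br a b (br u a)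
  | rb {u : L} : InM br a b u → InM br a b (br u b)

variable {br : L →ₗ[K] L →ₗ[K] L} {a b : L}

theorem InM.neg {u : L} (h : InM br a b u) : InM br a b (-u) := by
  rw [← neg_one_smul K]; exact h.smul _
theorem InM.sub {u v : L} (h : InM br a b u) (h' : InM br a b v) : InM br a b (u - v) := by
  rw [sub_eq_add_neg]; exact h.add h'.neg

variable [CharZero K] (anti : ∀ u v, br u v = -br v u)
  (tort : ∀ x y z, br (br x y) (br z y)
    = br (br (br x y) z + br (br y z) x + br (br z x) y) y)

include anti in
theorem br_self (u : L) : br u u = 0 := by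
  have h := anti u u
  have : (2 : K) • br u u = 0 := by rw [two_smul]; nth_rewrite 1 [h]; abel
  exact (smul_eq_zero.mp this).resolve_left two_ne_zero

include anti tort in
theorem InM_c {t : L} (h : InM br a b t) : InM br a b (br t (br a b)) := by
  induction h with
  | c => rw [br_self anti]; exact .zero
  | zero => rw [map_zero, LinearMap.zero_apply]; exact .zero
  | add _ _ h1 h2 => rw [map_add, LinearMap.add_apply]; exact h1.add h2
  | smul k _ h1 => rw [map_smul, LinearMap.smul_apply]; exact h1.smul k
  | @ra u hu ih =>
    rw [anti a b, map_neg, tort u a b]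
    refine (InM.ra ?_).neg
    rw [anti (br a b) u, anti b u, map_neg, LinearMap.neg_apply]
    exact (hu.ra.rb.add ih.neg).add hu.rb.ra.neg
  | @rb u hu ih =>
    rw [tort u b a]
    refine InM.rb ?_
    rw [anti b a, map_neg, LinearMap.neg_apply, anti (br a b) u, neg_neg, anti a u, map_neg,
      LinearMap.neg_apply]
    exact (hu.rb.ra.add ih).add hu.ra.rb.neg

include tort in
theorem tort_lin (x y z w : L) : br (br x y) (br z w) + br (br x w) (br z y) =
    br (br (br x y) z + br (br y z) x + br (br z x) y) w +
    br (br (br x w) z + br (br w z) x + br (br z x) w) y := by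
  have h := tort x (y + w) z
  have h1 := tort x y z
  have h2 := tort x w z
  simp only [map_add, LinearMap.add_apply] at h h1 h2 ⊢
  rw [h1, h2] at h
  rw [← sub_eq_zero] at h ⊢
  rw [← h]
  abel

include anti tort in
theorem InM_mul {u : L} (hu : InM br a b u) : ∀ {v : L}, InM br a b v → InM br a b (br v u) := by
  induction hu with
  | c => intro v hv; exact InM_c anti tort hv
  | zero => intro v hv; rw [map_zero]; exact .zero
  | add _ _ h1 h2 => intro v hv; rw [map_add]; exact (h1 hv).add (h2 hv)
  | smul k _ h1 => intro v hv; rw [map_smul]; exact (h1 hv).smul k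
  | @ra u hu ih =>
    intro v hv
    induction hv with
    | c => rw [anti]; exact (InM_c anti tort hu.ra).neg
    | zero => rw [map_zero, LinearMap.zero_apply]; exact .zero
    | add _ _ h1 h2 => rw [map_add, LinearMap.add_apply]; exact h1.add h2
    | smul k _ h1 => rw [map_smul, LinearMap.smul_apply]; exact h1.smul k
    | @ra v hv ihv =>
      rw [tort v a u]
      refine InM.ra ?_
      rw [anti a u, anti u v, map_neg, map_neg, LinearMap.neg_apply, LinearMap.neg_apply,
        anti (br u a) v, neg_neg]
      exact ((ih hv.ra).add ihv).add (ih hv).ra.neg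
    | @rb v hv ihv =>
      have e := tort_lin tort v b a u
      have e2 : br (br v b) (br u a) = br (br v u) (br a b)
          - br (br (br v b) a + br (br b a) v + br (br a v) b) u
          - br (br (br v u) a + br (br u a) v + br (br a v) u) b := by
        rw [sub_sub, ← e, anti u a, map_neg]; abel
      rw [e2]
      refine ((InM_c anti tort (ih hv)).sub (ih ?_)).sub (InM.rb ?_)
      · rw [anti b a, map_neg, LinearMap.neg_apply, anti (br a b) v, neg_neg, anti a v, map_neg,
          LinearMap.neg_apply]
        exact (hv.rb.ra.add (InM_c anti tort hv)).add hv.ra.rb.neg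
      · rw [anti (br u a) v, anti a v, map_neg, LinearMap.neg_apply]
        exact ((ih hv).ra.add ihv.neg).add (ih hv.ra).neg
  | @rb u hu ih =>
    intro v hv
    induction hv with
    | c => rw [anti]; exact (InM_c anti tort hu.rb).neg
    | zero => rw [map_zero, LinearMap.zero_apply]; exact .zero
    | add _ _ h1 h2 => rw [map_add, LinearMap.add_apply]; exact h1.add h2
    | smul k _ h1 => rw [map_smul, LinearMap.smul_apply]; exact h1.smul k
    | @rb v hv ihv =>
      rw [tort v b u]
      refine InM.rb ?_
      rw [anti b u, anti u v, map_neg, map_neg, LinearMap.neg_apply, LinearMap.neg_apply,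
        anti (br u b) v, neg_neg]
      exact ((ih hv.rb).add ihv).add (ih hv).rb.neg
    | @ra v hv ihv =>
      have e := tort_lin tort v a b u
      have e2 : br (br v a) (br u b) = - br (br v u) (br a b)
          - br (br (br v a) b + br (br a b) v + br (br b v) a) u
          - br (br (br v u) b + br (br u b) v + br (br b v) u) a := by
        rw [sub_sub, ← e, anti u b, map_neg, anti b a, map_neg]; abel
      rw [e2]
      refine ((InM_c anti tort (ih hv)).neg.sub (ih ?_)).sub (InM.ra ?_)
      · rw [anti (br a b) v, anti b v, map_neg, LinearMap.neg_apply]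
        exact (hv.ra.rb.add (InM_c anti tort hv).neg).add hv.rb.ra.neg
      · rw [anti (br u b) v, anti b v, map_neg, LinearMap.neg_apply]
        exact ((ih hv).rb.add ihv.neg).add (ih hv.rb).neg

variable (br a b) in
/-- the subspace generated by `a`, `b` and the words -/
def Sp : Submodule K L where
  carrier := {p | ∃ (k l : K) (m : L), InM br a b m ∧ p = k • a + l • b + m}
  zero_mem' := ⟨0, 0, 0, .zero, by simp⟩
  add_mem' := by
    rintro _ _ ⟨k, l, m, hm, rfl⟩ ⟨k', l', m', hm', rfl⟩
    exact ⟨k + k', l + l', m + m', hm.add hm', by rw [add_smul, add_smul]; abel⟩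
  smul_mem' := by
    rintro r _ ⟨k, l, m, hm, rfl⟩
    exact ⟨r * k, r * l, r • m, hm.smul r, by simp only [smul_add, smul_smul]⟩

include anti tort in
theorem Sp_br {p q : L} (hp : p ∈ Sp br a b) (hq : q ∈ Sp br a b) :
    InM br a b (br p q) := by
  obtain ⟨k, l, m, hm, rfl⟩ := hp
  obtain ⟨k', l', m', hm', rfl⟩ := hq
  simp only [map_add, map_smul, LinearMap.add_apply, LinearMap.smul_apply]
  rw [br_self anti a, br_self anti b, anti b a, anti a m', anti b m']
  have h0 : InM br a b (0 : L) := .zero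
  have hc : InM br a b (br a b) := .c
  refine InM.add (InM.add ?_ ?_) ?_
  · exact ((h0.smul _).add (hc.neg.smul _) |>.add (hm.ra)).smul _
  · exact ((hc.smul _).add (h0.smul _) |>.add (hm.rb)).smul _
  · exact ((hm'.ra.neg.smul _).add (hm'.rb.neg.smul _)).add (InM_mul anti tort hm' hm)

end tort

section zin
variable {K : Type} [Field K] {Z : Type} [NonUnitalNonAssocRing Z] [Module K Z]
  [SMulCommClass K Z Z] [IsScalarTower K Z Z]

variable (K) in
/-- left multiplication -/
def lam (a : Z) : Module.End K Z := LinearMap.mulLeft K a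
variable (K) in
/-- multiplication in the symmetrized algebra -/
def alp (a : Z) : Module.End K Z := LinearMap.mulLeft K a + LinearMap.mulRight K a

theorem lam_app (a x : Z) : lam K a x = a * x := rfl
theorem alp_app (a x : Z) : alp K a x = a * x + x * a := rfl

variable (K Z) in
/-- commutator -/
def brZ : Z →ₗ[K] Z →ₗ[K] Z := LinearMap.mul K Z - (LinearMap.mul K Z).flip
theorem brZ_app (x y : Z) : brZ K Z x y = x * y - y * x := rfl

variable (hz : ∀ a b c : Z, a * (b * c) = (a * b + b * a) * c)

include hz in
theorem lam_comm (a b : Z) : Commute (lam K a) (lam K b) := by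
  ext x
  simp only [Module.End.mul_apply, lam_app]
  rw [hz, hz b, add_comm]

include hz in
theorem alp_assoc (a x y : Z) : alp K x (alp K a y) = alp K a (alp K x y) := by
  simp only [alp_app, mul_add, add_mul, hz]
  abel

include hz in
theorem alp_comm (a b : Z) : Commute (alp K a) (alp K b) := by
  ext x
  simp only [Module.End.mul_apply]
  exact alp_assoc hz _ _ _

theorem alp_swap (x y : Z) : alp K x y = alp K y x := by
  simp only [alp_app]; abel

include hz in
theorem pow_alp (m : ℕ) (a x y : Z) : alp K x ((alp K a ^ m) y) = (alp K a ^ m) (alp K x y) := by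
  have := ((alp_comm (K := K) hz x a).pow_right m)
  exact congrArg (fun f => f y) this.eq

include hz in
theorem alp_mul (a x y : Z) : alp K a x * y = lam K a (x * y) := by
  rw [alp_app, lam_app, hz]

include hz in
theorem alp_pow_mul (m : ℕ) (a x y : Z) : (alp K a ^ m) x * y = (lam K a ^ m) (x * y) := by
  induction m with
  | zero => rfl
  | succ m ih => rw [pow_succ', pow_succ', Module.End.mul_apply, Module.End.mul_apply,
      alp_mul hz, ih]

include hz in
theorem star1 (n : ℕ) (b i : Z) : (alp K b ^ n) i = ((1 : K) + n) • (lam K b ^ n) i +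
    (n : K) • (lam K b ^ (n - 1)) (brZ K Z i b) := by
  induction n with
  | zero => simp
  | succ n ih =>
    rw [pow_succ', Module.End.mul_apply, alp_app, alp_pow_mul hz]
    have e : i * b = lam K b i + brZ K Z i b := by rw [lam_app, brZ_app]; abel
    rw [ih, e, ← lam_app (K := K) b, map_add, map_smul, map_smul, map_add]
    have e1 : (lam K b ^ n) (lam K b i) = (lam K b ^ (n + 1)) i := by
      rw [pow_succ, Module.End.mul_apply]
    have e2 : lam K b ((lam K b ^ n) i) = (lam K b ^ (n + 1)) i := by
      rw [pow_succ', Module.End.mul_apply]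
    have e3 : (n : K) • lam K b ((lam K b ^ (n - 1)) (brZ K Z i b)) =
        (n : K) • (lam K b ^ n) (brZ K Z i b) := by
      cases n with
      | zero => simp
      | succ n => rw [← Module.End.mul_apply, ← pow_succ']; rfl
    rw [e1, e2, e3, Nat.add_sub_cancel]
    push_cast
    module

include hz in
theorem star2 (m n : ℕ) (a b i : Z) : (alp K a ^ m) ((alp K b ^ n) i) =
    ((1 : K) + m + n) • (lam K a ^ m) ((lam K b ^ n) i) +
    (m : K) • (lam K a ^ (m - 1)) ((lam K b ^ n) (brZ K Z i a)) +
    (n : K) • (lam K a ^ m) ((lam K b ^ (n - 1)) (brZ K Z i b)) := by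
  induction m with
  | zero => simp [star1 hz n b i]
  | succ m ih =>
    rw [pow_succ', Module.End.mul_apply, alp_app, alp_pow_mul hz, alp_pow_mul hz]
    have e : i * a = lam K a i + brZ K Z i a := by rw [lam_app, brZ_app]; abel
    rw [ih, e, ← lam_app (K := K) a]
    simp only [map_add, map_smul]
    have e0 : (lam K b ^ n) (lam K a i) = lam K a ((lam K b ^ n) i) :=
      congrArg (fun f => f i) ((lam_comm (K := K) hz a b).pow_right n).eq.symm
    have e1 : ∀ x, (lam K a ^ m) (lam K a x) = (lam K a ^ (m + 1)) x := by
      intro x; rw [pow_succ, Module.End.mul_apply]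
    have e2 : ∀ x, lam K a ((lam K a ^ m) x) = (lam K a ^ (m + 1)) x := by
      intro x; rw [pow_succ', Module.End.mul_apply]
    have e3 : ∀ x, (m : K) • lam K a ((lam K a ^ (m - 1)) x) =
        (m : K) • (lam K a ^ m) x := by
      intro x
      cases m with
      | zero => simp
      | succ m => rw [← Module.End.mul_apply, ← pow_succ']; rfl
    rw [e0, e1, e2, e3, e2, Nat.add_sub_cancel]
    push_cast
    module

variable (a b : Z)

/-- `P * I` -/
def JJ (I : Submodule K Z) : Submodule K Z :=
  Submodule.span K {x | ∃ (m n : ℕ) (i : Z), i ∈ I ∧ x = (alp K a ^ m) ((alp K b ^ n) i)}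

variable {a b} {I : Submodule K Z}

theorem JJ_base (m n : ℕ) {i : Z} (hi : i ∈ I) : (alp K a ^ m) ((alp K b ^ n) i) ∈ JJ a b I :=
  Submodule.subset_span ⟨m, n, i, hi, rfl⟩

theorem JJ_of {i : Z} (hi : i ∈ I) : i ∈ JJ a b I := by
  simpa using JJ_base (a := a) (b := b) 0 0 hi

theorem JJ_ind {x : Z} (hx : x ∈ JJ a b I) (N : Submodule K Z)
    (h : ∀ (m n : ℕ) (i : Z), i ∈ I → (alp K a ^ m) ((alp K b ^ n) i) ∈ N) : x ∈ N := by
  refine (Submodule.span_le (p := N)).mpr ?_ hx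
  rintro _ ⟨m, n, i, hi, rfl⟩
  exact h m n i hi

theorem JJ_powa (r : ℕ) {x : Z} (hx : x ∈ JJ a b I) : (alp K a ^ r) x ∈ JJ a b I := by
  refine JJ_ind hx ((JJ a b I).comap (alp K a ^ r)) ?_
  intro m n i hi
  rw [Submodule.mem_comap, ← Module.End.mul_apply, ← pow_add]
  exact JJ_base _ _ hi

include hz in
theorem JJ_powb (r : ℕ) {x : Z} (hx : x ∈ JJ a b I) : (alp K b ^ r) x ∈ JJ a b I := by
  refine JJ_ind hx ((JJ a b I).comap (alp K b ^ r)) ?_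
  intro m n i hi
  have : (alp K b ^ r) ((alp K a ^ m) ((alp K b ^ n) i)) =
      (alp K a ^ m) ((alp K b ^ r) ((alp K b ^ n) i)) :=
    congrArg (fun f => f ((alp K b ^ n) i)) ((alp_comm (K := K) hz b a).pow_pow r m).eq
  rw [Submodule.mem_comap, this, ← Module.End.mul_apply (alp K b ^ r), ← pow_add]
  exact JJ_base _ _ hi

variable [CharZero K]
include hz

theorem lam_mem (hIa : ∀ i ∈ I, brZ K Z i a ∈ I) (hIb : ∀ i ∈ I, brZ K Z i b ∈ I) (N : ℕ) :
    ∀ m n : ℕ, m + n = N → ∀ i ∈ I, (lam K a ^ m) ((lam K b ^ n) i) ∈ JJ a b I := by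
  induction N with
  | zero =>
    intro m n h i hi
    obtain ⟨rfl, rfl⟩ : m = 0 ∧ n = 0 := by omega
    simpa using JJ_of hi
  | succ N ih =>
    intro m n h i hi
    have e := star2 (K := K) hz m n a b i
    have h1 : (m : K) • (lam K a ^ (m - 1)) ((lam K b ^ n) (brZ K Z i a)) ∈ JJ a b I := by
      cases m with
      | zero => simp
      | succ m => exact Submodule.smul_mem _ _ (ih _ _ (by simp; omega) _ (hIa i hi))
    have h2 : (n : K) • (lam K a ^ m) ((lam K b ^ (n - 1)) (brZ K Z i b)) ∈ JJ a b I := by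
      cases n with
      | zero => simp
      | succ n => exact Submodule.smul_mem _ _ (ih _ _ (by simp; omega) _ (hIb i hi))
    have h3 : ((1 : K) + m + n) • (lam K a ^ m) ((lam K b ^ n) i) ∈ JJ a b I := by
      have : ((1 : K) + m + n) • (lam K a ^ m) ((lam K b ^ n) i) =
        (alp K a ^ m) ((alp K b ^ n) i) -
        (m : K) • (lam K a ^ (m - 1)) ((lam K b ^ n) (brZ K Z i a)) -
        (n : K) • (lam K a ^ m) ((lam K b ^ (n - 1)) (brZ K Z i b)) := by
        rw [e]; abel
      rw [this]
      exact sub_mem (sub_mem (JJ_base _ _ hi) h1) h2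
    have hne : ((1 : K) + m + n) ≠ 0 := by exact_mod_cast (by omega : 1 + m + n ≠ 0)
    exact (Submodule.smul_mem_iff _ hne).mp h3

theorem JJ_mul_a (hIa : ∀ i ∈ I, brZ K Z i a ∈ I) (hIb : ∀ i ∈ I, brZ K Z i b ∈ I)
    {x : Z} (hx : x ∈ JJ a b I) : x * a ∈ JJ a b I := by
  refine JJ_ind hx ((JJ a b I).comap (LinearMap.mulRight K a)) ?_
  intro m n i hi
  rw [Submodule.mem_comap, LinearMap.mulRight_apply, alp_pow_mul hz, alp_pow_mul hz]
  have e : i * a = lam K a i + brZ K Z i a := by rw [lam_app, brZ_app]; abel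
  have e0 : (lam K b ^ n) (lam K a i) = lam K a ((lam K b ^ n) i) :=
      congrArg (fun f => f i) ((lam_comm (K := K) hz a b).pow_right n).eq.symm
  rw [e, map_add, map_add, e0, ← Module.End.mul_apply, ← pow_succ]
  exact add_mem (lam_mem hz hIa hIb _ _ _ rfl _ hi) (lam_mem hz hIa hIb _ _ _ rfl _ (hIa i hi))

theorem JJ_mul_b (hIa : ∀ i ∈ I, brZ K Z i a ∈ I) (hIb : ∀ i ∈ I, brZ K Z i b ∈ I)
    {x : Z} (hx : x ∈ JJ a b I) : x * b ∈ JJ a b I := by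
  refine JJ_ind hx ((JJ a b I).comap (LinearMap.mulRight K b)) ?_
  intro m n i hi
  rw [Submodule.mem_comap, LinearMap.mulRight_apply, alp_pow_mul hz, alp_pow_mul hz]
  have e : i * b = lam K b i + brZ K Z i b := by rw [lam_app, brZ_app]; abel
  rw [e, map_add, map_add, ← Module.End.mul_apply (lam K b ^ n), ← pow_succ]
  exact add_mem (lam_mem hz hIa hIb _ _ _ rfl _ hi) (lam_mem hz hIa hIb _ _ _ rfl _ (hIb i hi))

omit [CharZero K] in
theorem sym_br (i u v : Z) : alp K i (brZ K Z u v) = alp K u (brZ K Z i v) - alp K v (brZ K Z i u)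
    + (brZ K Z (brZ K Z i u) v + brZ K Z (brZ K Z u v) i + brZ K Z (brZ K Z v i) u) := by
  simp only [alp_app, brZ_app, mul_sub, sub_mul, hz, add_mul]
  abel

variable {S : Submodule K Z} (ha : a ∈ S) (hb : b ∈ S)
  (hSbr : ∀ s ∈ S, ∀ t ∈ S, brZ K Z s t ∈ S)
  (hgen : ∀ s ∈ S, ∃ (k l : K) (m : Z), InM (brZ K Z) a b m ∧ s = k • a + l • b + m)
include ha hb hSbr

omit [CharZero K] hz in
theorem InM_S {m : Z} (hm : InM (brZ K Z) a b m) : m ∈ S := by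
  induction hm with
  | c => exact hSbr _ ha _ hb
  | zero => exact zero_mem _
  | add _ _ h1 h2 => exact add_mem h1 h2
  | smul k _ h1 => exact S.smul_mem k h1
  | ra _ h => exact hSbr _ h _ ha
  | rb _ h => exact hSbr _ h _ hb

omit hz ha hb hSbr [CharZero K] in
theorem brZ_anti (x y : Z) : brZ K Z x y = - brZ K Z y x := by
  simp only [brZ_app]; abel

omit [CharZero K] in
theorem JJ_sym_M (hI : ∀ i ∈ I, ∀ s ∈ S, brZ K Z i s ∈ I) {m : Z} (hm : InM (brZ K Z) a b m) :
    ∀ i ∈ I, alp K i m ∈ JJ a b I := by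
  have hpa : ∀ i ∈ I, alp K a i ∈ JJ a b I := fun i hi => by
    simpa using JJ_powa (a := a) (b := b) 1 (JJ_of (a := a) (b := b) hi)
  have hpb : ∀ i ∈ I, alp K b i ∈ JJ a b I := fun i hi => by
    simpa using JJ_powb (a := a) (b := b) hz 1 (JJ_of (a := a) (b := b) hi)
  have hJac : ∀ i ∈ I, ∀ u ∈ S, ∀ v ∈ S, brZ K Z (brZ K Z i u) v + brZ K Z (brZ K Z u v) i +
      brZ K Z (brZ K Z v i) u ∈ JJ a b I := by
    intro i hi u hu v hv
    apply JJ_of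
    refine add_mem (add_mem (hI _ (hI _ hi _ hu) _ hv) ?_) ?_
    · rw [brZ_anti]; exact neg_mem (hI _ hi _ (hSbr _ hu _ hv))
    · rw [brZ_anti v i, map_neg, LinearMap.neg_apply]; exact neg_mem (hI _ (hI _ hi _ hv) _ hu)
  induction hm with
  | c =>
    intro i hi
    rw [sym_br hz]
    exact add_mem (sub_mem (hpa _ (hI _ hi _ hb)) (hpb _ (hI _ hi _ ha))) (hJac i hi a ha b hb)
  | zero => intro i _; rw [map_zero]; exact zero_mem _
  | add _ _ h1 h2 => intro i hi; rw [map_add]; exact add_mem (h1 i hi) (h2 i hi)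
  | smul k _ h1 => intro i hi; rw [map_smul]; exact Submodule.smul_mem _ _ (h1 i hi)
  | @ra u hu ih =>
    intro i hi
    have hu' := InM_S ha hb hSbr hu
    rw [sym_br hz, alp_swap u]
    exact add_mem (sub_mem (ih _ (hI _ hi _ ha)) (hpa _ (hI _ hi _ hu'))) (hJac i hi u hu' a ha)
  | @rb u hu ih =>
    intro i hi
    have hu' := InM_S ha hb hSbr hu
    rw [sym_br hz, alp_swap u]
    exact add_mem (sub_mem (ih _ (hI _ hi _ hb)) (hpb _ (hI _ hi _ hu'))) (hJac i hi u hu' b hb)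

include hgen

omit [CharZero K] in
theorem JJ_sym_JJ (hI : ∀ i ∈ I, ∀ s ∈ S, brZ K Z i s ∈ I) {x y : Z} (hx : x ∈ JJ a b I)
    (hy : y ∈ JJ a b S) : alp K x y ∈ JJ a b I := by
  have h1 : ∀ i ∈ I, ∀ s ∈ S, alp K s i ∈ JJ a b I := by
    intro i hi s hs
    obtain ⟨k, l, m, hm, rfl⟩ := hgen s hs
    rw [← alp_swap, map_add, map_add, map_smul, map_smul]
    refine add_mem (add_mem (Submodule.smul_mem _ _ ?_) (Submodule.smul_mem _ _ ?_))
      (JJ_sym_M hz ha hb hSbr hI hm i hi)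
    · rw [alp_swap]; simpa using JJ_powa (a := a) (b := b) 1 (JJ_of (a := a) (b := b) hi)
    · rw [alp_swap]; simpa using JJ_powb (a := a) (b := b) hz 1 (JJ_of (a := a) (b := b) hi)
  have h2 : ∀ s ∈ S, alp K s x ∈ JJ a b I := by
    intro s hs
    refine JJ_ind hx ((JJ a b I).comap (alp K s)) ?_
    intro m n i hi
    rw [Submodule.mem_comap, pow_alp hz, pow_alp hz]
    exact JJ_powa _ (JJ_powb hz _ (h1 i hi s hs))
  refine JJ_ind hy ((JJ a b I).comap (alp K x)) ?_
  intro m n s hs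
  rw [Submodule.mem_comap, pow_alp hz, pow_alp hz, alp_swap]
  exact JJ_powa _ (JJ_powb hz _ (h2 s hs))

theorem JJ_mul_right (hI : ∀ i ∈ I, ∀ s ∈ S, brZ K Z i s ∈ I) {v : Z} (hv : v ∈ JJ a b S) :
    (∀ j ∈ JJ a b S, j * v ∈ JJ a b S) ∧ (∀ j ∈ JJ a b I, j * v ∈ JJ a b I) := by
  let G : Submodule K Z :=
    { carrier := {v | v ∈ JJ a b S ∧ (∀ j ∈ JJ a b S, j * v ∈ JJ a b S) ∧
        (∀ j ∈ JJ a b I, j * v ∈ JJ a b I)}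
      zero_mem' := ⟨zero_mem _, fun j _ => by rw [mul_zero]; exact zero_mem _,
        fun j _ => by rw [mul_zero]; exact zero_mem _⟩
      add_mem' := fun h h' => ⟨add_mem h.1 h'.1,
        fun j hj => by rw [mul_add]; exact add_mem (h.2.1 j hj) (h'.2.1 j hj),
        fun j hj => by rw [mul_add]; exact add_mem (h.2.2 j hj) (h'.2.2 j hj)⟩
      smul_mem' := fun k _ h => ⟨Submodule.smul_mem _ _ h.1,
        fun j hj => by rw [mul_smul_comm]; exact Submodule.smul_mem _ _ (h.2.1 j hj),
        fun j hj => by rw [mul_smul_comm]; exact Submodule.smul_mem _ _ (h.2.2 j hj)⟩ }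
  have hmul : ∀ v v', v ∈ G → v' ∈ G → v * v' ∈ G := by
    intro v v' h h'
    refine ⟨h'.2.1 _ h.1, fun j hj => ?_, fun j hj => ?_⟩
    · rw [hz]; exact h'.2.1 _ (JJ_sym_JJ hz ha hb hSbr hgen hSbr hj h.1)
    · rw [hz]; exact h'.2.2 _ (JJ_sym_JJ hz ha hb hSbr hgen hI hj h.1)
  have hbr : ∀ v v', v ∈ G → v' ∈ G → brZ K Z v v' ∈ G := by
    intro v v' h h'
    rw [brZ_app]; exact sub_mem (hmul _ _ h h') (hmul _ _ h' h)
  have haG : a ∈ G := ⟨JJ_of ha,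
    fun j hj => JJ_mul_a hz (fun i hi => hSbr i hi a ha) (fun i hi => hSbr i hi b hb) hj,
    fun j hj => JJ_mul_a hz (fun i hi => hI i hi a ha) (fun i hi => hI i hi b hb) hj⟩
  have hbG : b ∈ G := ⟨JJ_of hb,
    fun j hj => JJ_mul_b hz (fun i hi => hSbr i hi a ha) (fun i hi => hSbr i hi b hb) hj,
    fun j hj => JJ_mul_b hz (fun i hi => hI i hi a ha) (fun i hi => hI i hi b hb) hj⟩
  have hSG : ∀ s ∈ S, s ∈ G := by
    intro s hs
    obtain ⟨k, l, m, hm, rfl⟩ := hgen s hs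
    exact add_mem (add_mem (G.smul_mem _ haG) (G.smul_mem _ hbG)) (InM_S haG hbG
      (fun s hs t ht => hbr s t hs ht) hm)
  have hpow : ∀ (c : Z), c ∈ G → ∀ (n : ℕ) (x : Z), x ∈ G → (alp K c ^ n) x ∈ G := by
    intro c hc n x hx
    induction n with
    | zero => exact hx
    | succ n ih =>
      rw [pow_succ', Module.End.mul_apply, alp_app]
      exact add_mem (hmul _ _ hc ih) (hmul _ _ ih hc)
  have : v ∈ G := JJ_ind hv G fun m n s hs => hpow a haG m _ (hpow b hbG n _ (hSG s hs))
  exact this.2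

theorem JJ_mul_left (hI : ∀ i ∈ I, ∀ s ∈ S, brZ K Z i s ∈ I) {v : Z} (hv : v ∈ JJ a b S)
    {j : Z} (hj : j ∈ JJ a b I) : v * j ∈ JJ a b I := by
  have h1 := JJ_sym_JJ hz ha hb hSbr hgen hI hj hv
  have h2 := (JJ_mul_right hz ha hb hSbr hgen hI hv).2 j hj
  have e : v * j = alp K j v - j * v := by rw [alp_app]; abel
  rw [e]; exact sub_mem h1 h2

omit [CharZero K] hz ha hb hSbr hgen in
theorem JJ_decomp {x : Z} (hx : x ∈ JJ a b I) :
    ∃ i ∈ I, ∃ X Y, x = i + alp K a X + alp K b Y := by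
  let N : Submodule K Z := I ⊔ LinearMap.range (alp K a) ⊔ LinearMap.range (alp K b)
  have : x ∈ N := by
    refine JJ_ind hx N ?_
    intro m n i hi
    cases m with
    | succ m =>
      rw [pow_succ', Module.End.mul_apply]
      exact Submodule.mem_sup_left (Submodule.mem_sup_right ⟨_, rfl⟩)
    | zero =>
      cases n with
      | succ n =>
        rw [pow_succ', Module.End.mul_apply]
        exact Submodule.mem_sup_right ⟨_, rfl⟩
      | zero => exact Submodule.mem_sup_left (Submodule.mem_sup_left hi)
  obtain ⟨y, hy, _, ⟨Y, rfl⟩, rfl⟩ := Submodule.mem_sup.mp this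
  obtain ⟨i, hi, _, ⟨X, rfl⟩, rfl⟩ := Submodule.mem_sup.mp hy
  exact ⟨i, hi, X, Y, rfl⟩

end zin

section quot
variable {K : Type} [Field K] {Z : Type} [NonUnitalNonAssocRing Z] [Module K Z]
  [SMulCommClass K Z Z] [IsScalarTower K Z Z]

theorem mk_zinbiel (hz : ∀ a b c : Z, a * (b * c) = (a * b + b * a) * c)
    (Z0 J : Submodule K Z) (hm : ∀ x ∈ Z0, ∀ y ∈ Z0, x * y ∈ Z0)
    (hl : ∀ x ∈ Z0, ∀ j ∈ J, x * j ∈ J) (hr : ∀ x ∈ Z0, ∀ j ∈ J, j * x ∈ J) :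
    ∃ (A : ZinbielAlgebra K) (q : Z0 →ₗ[K] A.carrier), (∀ x, q x = 0 ↔ x.1 ∈ J) ∧
      ∀ x y : Z0, q ⟨x.1 * y.1, hm _ x.2 _ y.2⟩ = q x * q y := by
  let B0 : Z0 →ₗ[K] Z0 →ₗ[K] Z0 := LinearMap.mk₂ K
    (fun x y => ⟨x.1 * y.1, hm _ x.2 _ y.2⟩)
    (fun x y z => Subtype.ext (add_mul _ _ _))
    (fun k x y => Subtype.ext (smul_mul_assoc _ _ _))
    (fun x y z => Subtype.ext (mul_add _ _ _))
    (fun k x y => Subtype.ext (mul_smul_comm _ _ _))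
  let J0 : Submodule K Z0 := J.comap Z0.subtype
  let B1 : Z0 →ₗ[K] (Z0 ⧸ J0) →ₗ[K] (Z0 ⧸ J0) :=
    { toFun := fun x => J0.mapQ J0 (B0 x) (fun j hj => hl _ x.2 _ hj)
      map_add' := fun x y => by
        apply Submodule.linearMap_qext
        ext z
        change J0.mkQ (B0 (x + y) z) = J0.mkQ (B0 x z) + J0.mkQ (B0 y z)
        rw [map_add, LinearMap.add_apply, map_add]
      map_smul' := fun k x => by
        apply Submodule.linearMap_qext
        ext z
        change J0.mkQ (B0 (k • x) z) = k • J0.mkQ (B0 x z)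
        rw [map_smul, LinearMap.smul_apply, map_smul] }
  let B : (Z0 ⧸ J0) →ₗ[K] (Z0 ⧸ J0) →ₗ[K] (Z0 ⧸ J0) := J0.liftQ B1 (fun j hj => by
    rw [LinearMap.mem_ker]
    apply Submodule.linearMap_qext
    ext z
    change J0.mkQ (B0 j z) = 0
    rw [Submodule.mkQ_apply, Submodule.Quotient.mk_eq_zero]
    exact hr _ z.2 _ hj)
  have hB : ∀ x y : Z0, B (J0.mkQ x) (J0.mkQ y) = J0.mkQ (B0 x y) := fun x y => rfl
  letI ring : NonUnitalNonAssocRing (Z0 ⧸ J0) :=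
    { (inferInstance : AddCommGroup (Z0 ⧸ J0)) with
      mul := fun x y => B x y
      left_distrib := fun x y z => (B x).map_add y z
      right_distrib := fun x y z => by
        change B (x + y) z = B x z + B y z
        rw [map_add, LinearMap.add_apply]
      zero_mul := fun x => by
        change B 0 x = 0
        rw [map_zero, LinearMap.zero_apply]
      mul_zero := fun x => (B x).map_zero }
  let A : ZinbielAlgebra K :=
    { carrier := Z0 ⧸ J0
      ring := ring
      mod := inferInstanceAs (Module K (Z0 ⧸ J0))
      smulComm := ⟨fun k x y => ((B x).map_smul k y).symm⟩
      tower := ⟨fun k x y => by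
        change B (k • x) y = k • B x y
        rw [map_smul, LinearMap.smul_apply]⟩
      zinbiel := by
        intro x y z
        obtain ⟨x, rfl⟩ := J0.mkQ_surjective x
        obtain ⟨y, rfl⟩ := J0.mkQ_surjective y
        obtain ⟨z, rfl⟩ := J0.mkQ_surjective z
        change J0.mkQ (B0 x (B0 y z)) = J0.mkQ (B0 (B0 x y + B0 y x) z)
        exact congrArg J0.mkQ (Subtype.ext (hz _ _ _)) }
  refine ⟨A, J0.mkQ, fun x => ?_, fun x y => rfl⟩
  exact Submodule.Quotient.mk_eq_zero J0

end quot

section final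
variable {K : Type} [Field K] [CharZero K] {T : Type} [NonUnitalNonAssocRing T] [Module K T]
    [SMulCommClass K T T] [IsScalarTower K T T]

theorem brZ_tort {Z : Type} [NonUnitalNonAssocRing Z] [Module K Z]
    [SMulCommClass K Z Z] [IsScalarTower K Z Z]
    (hz : ∀ a b c : Z, a * (b * c) = (a * b + b * a) * c) (x y z : Z) :
    brZ K Z (brZ K Z x y) (brZ K Z z y) = brZ K Z (brZ K Z (brZ K Z x y) z +
      brZ K Z (brZ K Z y z) x + brZ K Z (brZ K Z z x) y) y := by
  simp only [brZ_app, mul_sub, sub_mul, mul_add, add_mul, hz]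
  abel

variable (K T) in
/-- product bracket on `Zn × T` -/
def brP : (Zn K × T) →ₗ[K] (Zn K × T) →ₗ[K] (Zn K × T) := LinearMap.mk₂ K
  (fun p q => (brZ K (Zn K) p.1 q.1, p.2 * q.2))
  (fun p q r => by simp [add_mul])
  (fun k p q => by simp [smul_mul_assoc])
  (fun p q r => by simp [mul_add])
  (fun k p q => by simp [mul_smul_comm])

theorem brP_app (p q : Zn K × T) : brP K T p q = (brZ K (Zn K) p.1 q.1, p.2 * q.2) := rfl

def Gp (a b : T) : ℕ → Sh K → T → Prop
  | 0, w, t => w = 0 ∧ t = 0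
  | n + 1, w, t => ∃ (k : K) (w1 : Sh K) (t1 : T) (w2 : Sh K) (t2 : T),
      Gp a b n w1 t1 ∧ Gp a b n w2 t2 ∧
      w = k • (1 : Sh K) + (ii false w1 + la * w1) + (ii true w2 + lb * w2) ∧
      t = k • (a * b) - t1 * a - t2 * b

theorem Gp_zero (a b : T) : ∀ n, Gp a b n (0 : Sh K) 0
  | 0 => ⟨rfl, rfl⟩
  | n + 1 => ⟨0, 0, 0, 0, 0, Gp_zero a b n, Gp_zero a b n, by simp [ii_zero], by simp⟩

theorem Gp_succ (a b : T) : ∀ (n : ℕ) (w : Sh K) (t : T), Gp a b n w t → Gp a b (n + 1) w t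
  | 0, _, _, ⟨rfl, rfl⟩ => Gp_zero a b 1
  | n + 1, _, _, ⟨k, w1, t1, w2, t2, h1, h2, e1, e2⟩ =>
    ⟨k, w1, t1, w2, t2, Gp_succ a b n _ _ h1, Gp_succ a b n _ _ h2, e1, e2⟩

theorem Gp_le (a b : T) {n n' : ℕ} (h : n ≤ n') {w : Sh K} {t : T} (hw : Gp a b n w t) :
    Gp a b n' w t := by
  induction h with
  | refl => exact hw
  | step _ ih => exact Gp_succ a b _ _ _ ih

theorem Gp_add (a b : T) : ∀ (n : ℕ) (w w' : Sh K) (t t' : T), Gp a b n w t → Gp a b n w' t' →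
    Gp a b n (w + w') (t + t')
  | 0, _, _, _, _, ⟨rfl, rfl⟩, ⟨rfl, rfl⟩ => ⟨by simp, by simp⟩
  | n + 1, _, _, _, _, ⟨k, w1, t1, w2, t2, h1, h2, e1, e2⟩, ⟨k', w1', t1', w2', t2', h1', h2', e1', e2'⟩ =>
    ⟨k + k', w1 + w1', t1 + t1', w2 + w2', t2 + t2', Gp_add a b n _ _ _ _ h1 h1',
      Gp_add a b n _ _ _ _ h2 h2', by rw [e1, e1', ii_add, ii_add, add_smul]; ring, by
      rw [e2, e2', add_smul, add_mul, add_mul]; abel⟩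

theorem Gp_smul (a b : T) (r : K) : ∀ (n : ℕ) (w : Sh K) (t : T), Gp a b n w t →
    Gp a b n (r • w) (r • t)
  | 0, _, _, ⟨rfl, rfl⟩ => ⟨by simp, by simp⟩
  | n + 1, _, _, ⟨k, w1, t1, w2, t2, h1, h2, e1, e2⟩ =>
    ⟨r * k, r • w1, r • t1, r • w2, r • t2, Gp_smul a b r n _ _ h1,
      Gp_smul a b r n _ _ h2, by
        rw [e1, ii_smul, ii_smul, sh_mul_smul, sh_mul_smul]; simp only [smul_add, mul_smul], by
      rw [e2, smul_mul_assoc, smul_mul_assoc]; simp only [smul_sub, mul_smul]⟩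

theorem Gp_inj (a b : T) : ∀ (n : ℕ) (t : T), Gp a b n (0 : Sh K) t → t = 0
  | 0, _, h => h.2
  | n + 1, _, ⟨k, w1, t1, w2, t2, h1, h2, e1, e2⟩ => by
    obtain ⟨rfl, rfl, rfl⟩ := inj_step k w1 w2 e1.symm
    rw [e2, Gp_inj a b n t1 h1, Gp_inj a b n t2 h2]; simp

theorem InM_Gp {a b : T} {p : Zn K × T} (h : InM (brP K T) (za, a) (zb, b) p) :
    ∃ n w, Gp a b n w p.2 ∧ p.1 = zs w := by
  induction h with
  | c => exact ⟨1, 1, ⟨1, 0, 0, 0, 0, ⟨rfl, rfl⟩, ⟨rfl, rfl⟩, by simp [ii_zero], by simp [brP_app]⟩,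
      Subtype.ext br_ab⟩
  | zero => exact ⟨0, 0, ⟨rfl, rfl⟩, Subtype.ext (by
      change (0 : Sh K) = sk 0
      have := sk_smul (0 : K) (0 : Sh K)
      simpa using this.symm)⟩
  | @add u v _ _ h1 h2 =>
    obtain ⟨n, w, hw, e⟩ := h1
    obtain ⟨n', w', hw', e'⟩ := h2
    refine ⟨max n n', w + w', Gp_add a b _ _ _ _ _ (Gp_le a b (le_max_left _ _) hw)
      (Gp_le a b (le_max_right _ _) hw'), ?_⟩
    rw [Prod.fst_add, e, e']
    exact Subtype.ext (sk_add _ _).symm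
  | smul k _ h1 =>
    obtain ⟨n, w, hw, e⟩ := h1
    refine ⟨n, k • w, Gp_smul a b k _ _ _ hw, ?_⟩
    rw [Prod.smul_fst, e]
    exact Subtype.ext (sk_smul _ _).symm
  | @ra u _ h1 =>
    obtain ⟨n, w, hw, e⟩ := h1
    refine ⟨n + 1, (-1 : K) • (ii false w + la * w), ⟨0, (-1 : K) • w, (-1 : K) • u.2, 0, 0,
      Gp_smul a b _ _ _ _ hw, Gp_zero a b n, ?_, ?_⟩, ?_⟩
    · rw [ii_smul, sh_mul_smul, ii_zero]; simp
    · simp [brP_app]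
    · rw [brP_app, e]
      refine Subtype.ext ?_
      change hs (sk w) la - hs la (sk w) = sk _
      rw [br_sk_a, sk_smul, neg_one_smul]
  | @rb u _ h1 =>
    obtain ⟨n, w, hw, e⟩ := h1
    refine ⟨n + 1, (-1 : K) • (ii true w + lb * w), ⟨0, 0, 0, (-1 : K) • w, (-1 : K) • u.2,
      Gp_zero a b n, Gp_smul a b _ _ _ _ hw, ?_, ?_⟩, ?_⟩
    · rw [ii_smul, sh_mul_smul, ii_zero]; simp
    · simp [brP_app]
    · rw [brP_app, e]
      refine Subtype.ext ?_
      change hs (sk w) lb - hs lb (sk w) = sk _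
      rw [br_sk_b, sk_smul, neg_one_smul]

theorem InM_fst {a b : T} {p : Zn K × T} (h : InM (brP K T) (za, a) (zb, b) p) :
    InM (brZ K (Zn K)) za zb p.1 := by
  induction h with
  | c => exact .c
  | zero => exact .zero
  | add _ _ h1 h2 => exact h1.add h2
  | smul k _ h1 => exact h1.smul k
  | ra _ h1 => exact h1.ra
  | rb _ h1 => exact h1.rb

/-- an element of `Sp` whose first component is decomposable has zero first component -/
theorem Sp_decomp {a b : T} {p : Zn K × T} (hp : p ∈ Sp (brP K T) (za, a) (zb, b))
    {X Y : Zn K} (e : p.1 = alp K za X + alp K zb Y) : p = 0 := by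
  obtain ⟨k, l, m, hm, rfl⟩ := hp
  obtain ⟨n, w, hw, em⟩ := InM_Gp hm
  have e1 : k • la + l • lb + sk w = la * X.1 + lb * Y.1 := by
    have := congrArg Subtype.val e
    rw [Prod.fst_add, Prod.fst_add, em] at this
    rw [← show (za : Zn K).1 = la from rfl, ← show (zb : Zn K).1 = lb from rfl, ← Zn.sym_val,
      ← Zn.sym_val]
    exact this
  have hX := X.2
  have hY := Y.2
  have ea := congrFun (congrArg (dd false) e1) []
  have eb := congrFun (congrArg (dd true) e1) []
  simp only [dd_add, dd_smul, dd_mul, dda_la, ddb_la, dda_lb, ddb_lb, dda_sk, ddb_sk, Sh.add_app,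
    Sh.smul_app, one_nil, Sh.zero_app, Sh.neg_app, ii_nil, mul_nil, la_nil, lb_nil, hX, hY] at ea eb
  have hk : k = 0 := by simpa using ea
  have hl : l = 0 := by simpa using eb
  subst hk hl
  have hw0 : w = 0 := sk_not_decomp w X.1 Y.1 (by simpa using e1)
  subst hw0
  have hm2 : m.2 = 0 := Gp_inj a b n _ hw
  have hm1 : m.1 = 0 := by
    rw [em]
    refine Subtype.ext ?_
    change sk 0 = 0
    have := sk_smul (0 : K) (0 : Sh K)
    simpa using this
  have : m = 0 := Prod.ext hm1 hm2
  rw [this]; simp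

theorem main (hanti : ∀ a b : T, a * b = -(b * a))
    (htort : ∀ a b c : T,
      (a * b) * (c * b) = ((a * b) * c + (b * c) * a + (c * a) * b) * b)
    (a b : T) (hgen : NonUnitalAlgebra.adjoin K ({a, b} : Set T) = ⊤) :
    ∃ (A : ZinbielAlgebra K) (φ : T →ₗ[K] A.carrier),
      Function.Injective φ ∧ ∀ s t : T, φ (s * t) = φ s * φ t - φ t * φ s := by
  have anti : ∀ u v, brP K T u v = -brP K T v u := fun u v =>
    Prod.ext (brZ_anti _ _) (hanti _ _)
  have tort : ∀ x y z, brP K T (brP K T x y) (brP K T z y) = brP K T (brP K T (brP K T x y) z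
      + brP K T (brP K T y z) x + brP K T (brP K T z x) y) y := fun x y z =>
    Prod.ext (brZ_tort Zn.zinbiel _ _ _) (htort _ _ _)
  set U : Submodule K (Zn K × T) := Sp (brP K T) (za, a) (zb, b) with hU
  have hUbr : ∀ p ∈ U, ∀ q ∈ U, brP K T p q ∈ U := fun p hp q hq =>
    ⟨0, 0, _, Sp_br anti tort hp hq, by simp⟩
  have haU : ((za, a) : Zn K × T) ∈ U := ⟨1, 0, 0, .zero, by simp⟩
  have hbU : ((zb, b) : Zn K × T) ∈ U := ⟨0, 1, 0, .zero, by simp⟩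
  have hsurj : ∀ t : T, ∃ z : Zn K, (z, t) ∈ U := by
    intro t
    have ht : t ∈ NonUnitalAlgebra.adjoin K ({a, b} : Set T) := by rw [hgen]; trivial
    induction ht using NonUnitalAlgebra.adjoin_induction with
    | mem x hx =>
      rcases hx with rfl | rfl
      · exact ⟨_, haU⟩
      · exact ⟨_, hbU⟩
    | add x y _ _ hx hy =>
      obtain ⟨z, hz⟩ := hx
      obtain ⟨z', hz'⟩ := hy
      exact ⟨z + z', U.add_mem hz hz'⟩
    | zero => exact ⟨0, U.zero_mem⟩
    | mul x y _ _ hx hy =>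
      obtain ⟨z, hz⟩ := hx
      obtain ⟨z', hz'⟩ := hy
      exact ⟨_, hUbr _ hz _ hz'⟩
    | smul r x _ hx =>
      obtain ⟨z, hz⟩ := hx
      exact ⟨r • z, U.smul_mem r hz⟩
  choose σ hσ using hsurj
  let S : Submodule K (Zn K) := U.map (LinearMap.fst K (Zn K) T)
  let I : Submodule K (Zn K) := U.comap (LinearMap.inl K (Zn K) T)
  have hSmem : ∀ {z t}, (z, t) ∈ U → z ∈ S := fun {z t} h => ⟨(z, t), h, rfl⟩
  have haS : za ∈ S := hSmem haU
  have hbS : zb ∈ S := hSmem hbU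
  have hSbr : ∀ s ∈ S, ∀ t ∈ S, brZ K (Zn K) s t ∈ S := by
    rintro _ ⟨p, hp, rfl⟩ _ ⟨q, hq, rfl⟩
    exact ⟨_, hUbr p hp q hq, rfl⟩
  have hSgen : ∀ s ∈ S, ∃ (k l : K) (m : Zn K), InM (brZ K (Zn K)) za zb m ∧
      s = k • za + l • zb + m := by
    rintro _ ⟨_, ⟨k, l, m, hm, rfl⟩, rfl⟩
    exact ⟨k, l, m.1, InM_fst hm, rfl⟩
  have hI : ∀ i ∈ I, ∀ s ∈ S, brZ K (Zn K) i s ∈ I := by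
    rintro i hi _ ⟨q, hq, rfl⟩
    have := hUbr _ hi q hq
    rw [brP_app] at this
    change (_, _) ∈ U
    simpa using this
  have hIJ : ∀ {z}, (z, (0 : T)) ∈ U → z ∈ JJ za zb I := fun {z} h => JJ_of h
  obtain ⟨A, q, hq0, hqm⟩ := mk_zinbiel (K := K) Zn.zinbiel (JJ za zb S) (JJ za zb I)
    (fun x hx y hy => (JJ_mul_right Zn.zinbiel haS hbS hSbr hSgen hI hy).1 x hx)
    (fun x hx j hj => JJ_mul_left Zn.zinbiel haS hbS hSbr hSgen hI hx hj)
    (fun x hx j hj => (JJ_mul_right Zn.zinbiel haS hbS hSbr hSgen hI hx).2 j hj)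
  let τ : T → JJ za zb S := fun t => ⟨σ t, JJ_of (hSmem (hσ t))⟩
  have hq : ∀ x y : JJ za zb S, (x.1 - y.1, (0 : T)) ∈ U → q x = q y := by
    intro x y h
    rw [← sub_eq_zero, ← map_sub, hq0]
    exact hIJ h
  let φ : T →ₗ[K] A.carrier :=
    { toFun := fun t => q (τ t)
      map_add' := fun s t => by
        rw [← map_add]
        apply hq
        have := U.sub_mem (hσ (s + t)) (U.add_mem (hσ s) (hσ t))
        simpa using this
      map_smul' := fun k t => by
        rw [RingHom.id_apply, ← map_smul]
        apply hq
        have := U.sub_mem (hσ (k • t)) (U.smul_mem k (hσ t))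
        simpa using this }
  refine ⟨A, φ, ?_, ?_⟩
  · rw [injective_iff_map_eq_zero]
    intro t ht
    have h1 : σ t ∈ JJ za zb I := (hq0 (τ t)).mp ht
    obtain ⟨i, hi, X, Y, e⟩ := JJ_decomp h1
    have h2 : (σ t - i, t) ∈ U := by
      have := U.sub_mem (hσ t) hi
      simpa using this
    have h3 := Sp_decomp h2 (X := X) (Y := Y) (by
      change σ t - i = _
      rw [e]; abel)
    exact congrArg Prod.snd h3
  · intro s t
    change q (τ (s * t)) = q (τ s) * q (τ t) - q (τ t) * q (τ s)
    rw [← hqm, ← hqm, ← map_sub]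
    apply hq
    have := U.sub_mem (hσ (s * t)) (hUbr _ (hσ s) _ (hσ t))
    rw [brP_app] at this
    simpa [brZ_app] using this

end final
end TK

/-- Shirshov's theorem analogue: every Tortkara algebra over a field of characteristic 0
generated by two elements is special, i.e. it embeds into the minus-algebra `A⁽⁻⁾` of
some Zinbiel algebra `A`. -/
theorem tortkara_two_generated_special (K : Type) [Field K] [CharZero K]
    (T : Type) [NonUnitalNonAssocRing T] [Module K T]
    [SMulCommClass K T T] [IsScalarTower K T T]
    (hanti : ∀ a b : T, a * b = -(b * a))
    (htort : ∀ a b c : T,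
      (a * b) * (c * b) = ((a * b) * c + (b * c) * a + (c * a) * b) * b)
    (a b : T) (hgen : NonUnitalAlgebra.adjoin K ({a, b} : Set T) = ⊤) :
    ∃ (A : ZinbielAlgebra K) (φ : T →ₗ[K] A.carrier),
      Function.Injective φ ∧ ∀ s t : T, φ (s * t) = φ s * φ t - φ t * φ s := by
  exact TK.main hanti htort a b hgen
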